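/- arXiv:1711.01582 — 2 statements merged into one kernel-verified Lean document; each statement's English description precedes it below -/
import Mathlib

section
/- Entropy production identity for thermoviscoelasticity: Let ψ = ψ(F,θ) be C² on M^{3×3} × (0,∞) and set Σ = ∂ψ/∂F, η = −∂ψ/∂θ, e = ψ + θη. Let (F, v, θ) be C² fields on ℝ³ × ℝ⁺ with θ > 0, let Z, Q be C¹ fields (matrix- and vector-valued respectively) and r continuous, and suppose the thermoviscoelasticity system holds pointwise: ∂_t F_{iα} = ∂_α v_i; ∂_t v_i − ∂_α Σ_{iα}(F,θ) = ∂_α Z_{iα}; ∂_t(½|v|² + e(F,θ)) − ∂_α(Σ_{iα}(F,θ) v_i) = ∂_α(Z_{iα} v_i) + ∂_α Q_α + r. Then the entropy production identity holds pointwise: ∂_t η(F,θ) − ∂_α(Q_α/θ) = ∇θ·Q/θ² + (∂_α v_i) Z_{iα}/θ + r/θ (summation over repeated indices). -/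
open Real MeasureTheory Filter Set Topology ENNReal NNReal

noncomputable section

abbrev Vec3 := Fin 3 → ℝ
abbrev Mat3 := Fin 3 → Fin 3 → ℝ
abbrev Xi := Mat3 × Mat3 × ℝ
abbrev Idx := (Fin 3 × Fin 3) ⊕ ((Fin 3 × Fin 3) ⊕ Unit)
abbrev FullState := Xi × Vec3 × ℝ

/-- Levi-Civita symbol on three indices. -/
def eps3 (i j k : Fin 3) : ℝ :=
  if (i, j, k) = (0, 1, 2) ∨ (i, j, k) = (1, 2, 0) ∨ (i, j, k) = (2, 0, 1) then 1
  else if (i, j, k) = (2, 1, 0) ∨ (i, j, k) = (1, 0, 2) ∨ (i, j, k) = (0, 2, 1) then -1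
  else 0

/-- Cofactor matrix (cof F)_{iα} = (1/2) ε_{ijk} ε_{αβγ} F_{jβ} F_{kγ}. -/
def cof3 (F : Mat3) : Mat3 := fun i α =>
  (1/2) * ∑ j, ∑ k, ∑ β, ∑ γ, eps3 i j k * eps3 α β γ * F j β * F k γ

/-- det F = (1/6) ε_{ijk} ε_{αβγ} F_{iα} F_{jβ} F_{kγ}. -/
def det3 (F : Mat3) : ℝ :=
  (1/6) * ∑ i, ∑ j, ∑ k, ∑ α, ∑ β, ∑ γ,
    eps3 i j k * eps3 α β γ * F i α * F j β * F k γ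

/-- The vector of null Lagrangians Φ(F) = (F, cof F, det F). -/
def Phi3 (F : Mat3) : Xi := (F, cof3 F, det3 F)

/-- Component ξ^B of ξ ∈ ℝ^19. -/
def xiComp (ξ : Xi) : Idx → ℝ
  | .inl (i, α) => ξ.1 i α
  | .inr (.inl (i, α)) => ξ.2.1 i α
  | .inr (.inr _) => ξ.2.2

def updMat (F : Mat3) (i α : Fin 3) (s : ℝ) : Mat3 :=
  Function.update F i (Function.update (F i) α s)

/-- Update component B of ξ to value s. -/
def xiUpd (ξ : Xi) : Idx → ℝ → Xi
  | .inl (i, α), s => (updMat ξ.1 i α s, ξ.2)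
  | .inr (.inl (i, α)), s => (ξ.1, updMat ξ.2.1 i α s, ξ.2.2)
  | .inr (.inr _), s => (ξ.1, ξ.2.1, s)

/-- ∂Φ^B/∂F_{iα}(F). -/
def dPhi (B : Idx) (i α : Fin 3) (F : Mat3) : ℝ :=
  deriv (fun s => xiComp (Phi3 (updMat F i α s)) B) (F i α)

/-- Partial derivative ∂ψ̂/∂ξ^B of a function ψ̂(ξ, θ). -/
def dXi (B : Idx) (ψ : Xi → ℝ → ℝ) (ξ : Xi) (θ : ℝ) : ℝ :=
  deriv (fun s => ψ (xiUpd ξ B s) θ) (xiComp ξ B)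

/-- Partial derivative ∂ψ̂/∂θ. -/
def dTh (ψ : Xi → ℝ → ℝ) (ξ : Xi) (θ : ℝ) : ℝ :=
  deriv (fun s => ψ ξ s) θ

/-- η̂(ξ,θ) = −∂_θ ψ̂(ξ,θ). -/
def etaHat (ψ : Xi → ℝ → ℝ) (ξ : Xi) (θ : ℝ) : ℝ := -(dTh ψ ξ θ)

/-- ê(ξ,θ) = ψ̂(ξ,θ) − θ ∂_θ ψ̂(ξ,θ). -/
def eHat (ψ : Xi → ℝ → ℝ) (ξ : Xi) (θ : ℝ) : ℝ := ψ ξ θ - θ * dTh ψ ξ θ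

/-- Spatial partial derivative ∂_α of a space-time field. -/
def pdx (α : Fin 3) (f : Vec3 → ℝ → ℝ) (x : Vec3) (t : ℝ) : ℝ :=
  deriv (fun s => f (Function.update x α s) t) (x α)

/-- Time derivative ∂_t of a space-time field. -/
def pdt (f : Vec3 → ℝ → ℝ) (x : Vec3) (t : ℝ) : ℝ :=
  deriv (fun s => f x s) t

def mnorm (F : Mat3) : ℝ := Real.sqrt (∑ i, ∑ j, (F i j)^2)
def vnorm (v : Vec3) : ℝ := Real.sqrt (∑ i, (v i)^2)

/-- |ξ|_{p,q,r} = |F|^p + |ζ|^q + |w|^r. -/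
def xiNorm (p q r : ℝ) (ξ : Xi) : ℝ :=
  mnorm ξ.1 ^ p + mnorm ξ.2.1 ^ q + |ξ.2.2| ^ r

/-- The compact set Γ_{M,δ}. -/
def Gamma (M δ : ℝ) : Set FullState :=
  {U | mnorm U.1.1 ≤ M ∧ mnorm U.1.2.1 ≤ M ∧ |U.1.2.2| ≤ M ∧
       vnorm U.2.1 ≤ M ∧ δ ≤ U.2.2 ∧ U.2.2 ≤ M}

/-- Relative free energy ψ̂(ξ,θ|ξ̄,θ̄). -/
def psiRel (ψ : Xi → ℝ → ℝ) (ξ : Xi) (θ : ℝ) (ξ' : Xi) (θ' : ℝ) : ℝ :=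
  ψ ξ θ - ψ ξ' θ' - (∑ B : Idx, dXi B ψ ξ' θ' * (xiComp ξ B - xiComp ξ' B))
    + etaHat ψ ξ' θ' * (θ - θ')

/-- Relative entropy function η̂(ξ,θ|ξ̄,θ̄). -/
def etaRel (ψ : Xi → ℝ → ℝ) (ξ : Xi) (θ : ℝ) (ξ' : Xi) (θ' : ℝ) : ℝ :=
  etaHat ψ ξ θ - etaHat ψ ξ' θ'
    - (∑ B : Idx, dXi B (etaHat ψ) ξ' θ' * (xiComp ξ B - xiComp ξ' B))
    - dTh (etaHat ψ) ξ' θ' * (θ - θ')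

/-- Relative stress (∂ψ̂/∂ξ^B)(ξ,θ|ξ̄,θ̄). -/
def dXiRel (B : Idx) (ψ : Xi → ℝ → ℝ) (ξ : Xi) (θ : ℝ) (ξ' : Xi) (θ' : ℝ) : ℝ :=
  dXi B ψ ξ θ - dXi B ψ ξ' θ'
    - (∑ A : Idx, dXi A (dXi B ψ) ξ' θ' * (xiComp ξ A - xiComp ξ' A))
    - dTh (dXi B ψ) ξ' θ' * (θ - θ')

/-- Relative entropy I(ξ,v,θ|ξ̄,v̄,θ̄). -/
def relEnt (ψ : Xi → ℝ → ℝ) (ξ : Xi) (v : Vec3) (θ : ℝ)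
    (ξ' : Xi) (v' : Vec3) (θ' : ℝ) : ℝ :=
  psiRel ψ ξ θ ξ' θ' + (1/2) * (∑ i, (v i - v' i)^2)
    + (etaHat ψ ξ θ - etaHat ψ ξ' θ') * (θ - θ')

/-- ψ̂ is C³ on ℝ^19 × (0,∞). -/
def PsiC3 (ψ : Xi → ℝ → ℝ) : Prop :=
  ContDiffOn ℝ 3 (fun p : Xi × ℝ => ψ p.1 p.2) (Set.univ ×ˢ Set.Ioi (0:ℝ))

/-- ∇²_ξ ψ̂ > 0 and ∂_θ η̂ > 0. -/
def PsiConvex (ψ : Xi → ℝ → ℝ) : Prop :=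
  ∀ ξ : Xi, ∀ θ : ℝ, 0 < θ →
    (∀ u : Idx → ℝ, u ≠ 0 →
      0 < ∑ A : Idx, ∑ B : Idx, dXi A (dXi B ψ) ξ θ * u A * u B) ∧
    0 < dTh (etaHat ψ) ξ θ

def gradFnorm (ψ : Xi → ℝ → ℝ) (ξ : Xi) (θ : ℝ) : ℝ :=
  Real.sqrt (∑ i, ∑ α, (dXi (.inl (i, α)) ψ ξ θ)^2)
def gradZnorm (ψ : Xi → ℝ → ℝ) (ξ : Xi) (θ : ℝ) : ℝ :=
  Real.sqrt (∑ i, ∑ α, (dXi (.inr (.inl (i, α))) ψ ξ θ)^2)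
def gradWnorm (ψ : Xi → ℝ → ℝ) (ξ : Xi) (θ : ℝ) : ℝ :=
  |dXi (.inr (.inr ())) ψ ξ θ|

/-- The growth conditions (gr.con.1)-(gr.con.3). -/
def GrowthCond (ψ : Xi → ℝ → ℝ) (c p q r ℓ : ℝ) : Prop :=
  0 < c ∧
  (∀ ξ : Xi, ∀ θ : ℝ, 0 < θ →
    c * (xiNorm p q r ξ + θ ^ ℓ) - c ≤ eHat ψ ξ θ ∧
    eHat ψ ξ θ ≤ c * (xiNorm p q r ξ + θ ^ ℓ) + c) ∧
  (∀ ε : ℝ, 0 < ε → ∃ R : ℝ, ∀ ξ : Xi, ∀ θ : ℝ, 0 < θ →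
    R < xiNorm p q r ξ + θ ^ ℓ →
    gradFnorm ψ ξ θ + gradZnorm ψ ξ θ ^ (p/(p-1)) + gradWnorm ψ ξ θ ^ (p/(p-2))
      ≤ ε * (xiNorm p q r ξ + θ ^ ℓ)) ∧
  (∀ ε : ℝ, 0 < ε → ∃ R : ℝ, ∀ ξ : Xi, ∀ θ : ℝ, 0 < θ →
    R < xiNorm p q r ξ + θ ^ ℓ →
    |dTh ψ ξ θ| ≤ ε * (xiNorm p q r ξ + θ ^ ℓ))

/-- The augmented thermoviscoelasticity system with fields (Z, Q, r), at a point (x,t). -/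
def AugSys (ψ : Xi → ℝ → ℝ) (ξf : Vec3 → ℝ → Xi) (vf : Vec3 → ℝ → Vec3)
    (θf : Vec3 → ℝ → ℝ) (Z : Vec3 → ℝ → Mat3) (Q : Vec3 → ℝ → Vec3)
    (r : Vec3 → ℝ → ℝ) (x : Vec3) (t : ℝ) : Prop :=
  (∀ B : Idx, pdt (fun y s => xiComp (ξf y s) B) x t
      = ∑ α, pdx α (fun y s => ∑ i, dPhi B i α (ξf y s).1 * vf y s i) x t) ∧
  (∀ i, pdt (fun y s => vf y s i) x t
      = ∑ α, pdx α (fun y s =>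
          ∑ B : Idx, dXi B ψ (ξf y s) (θf y s) * dPhi B i α (ξf y s).1) x t
        + ∑ α, pdx α (fun y s => Z y s i α) x t) ∧
  (pdt (fun y s => (1/2) * (∑ i, (vf y s i)^2) + eHat ψ (ξf y s) (θf y s)) x t
      = ∑ α, pdx α (fun y s => ∑ i,
          (∑ B : Idx, dXi B ψ (ξf y s) (θf y s) * dPhi B i α (ξf y s).1) * vf y s i) x t
        + ∑ α, pdx α (fun y s => ∑ i, Z y s i α * vf y s i) x t
        + ∑ α, pdx α (fun y s => Q y s α) x t + r x t) ∧
  (∀ i α β, pdx α (fun y s => (ξf y s).1 i β) x t = pdx β (fun y s => (ξf y s).1 i α) x t)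

/-- The entropy production identity for the augmented system. -/
def EntropyIdent (ψ : Xi → ℝ → ℝ) (ξf : Vec3 → ℝ → Xi) (vf : Vec3 → ℝ → Vec3)
    (θf : Vec3 → ℝ → ℝ) (Z : Vec3 → ℝ → Mat3) (Q : Vec3 → ℝ → Vec3)
    (r : Vec3 → ℝ → ℝ) (x : Vec3) (t : ℝ) : Prop :=
  pdt (fun y s => etaHat ψ (ξf y s) (θf y s)) x t
    - ∑ α, pdx α (fun y s => Q y s α / θf y s) x t
  = (∑ α, pdx α θf x t * Q x t α) / (θf x t)^2
    + (∑ α, ∑ i, pdx α (fun y s => vf y s i) x t * Z x t i α) / θf x t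
    + r x t / θf x t

/-- Newtonian viscous stress Z = μ ∇v. -/
def newtonianZ (μ : Mat3 → ℝ → ℝ) (ξf : Vec3 → ℝ → Xi) (vf : Vec3 → ℝ → Vec3)
    (θf : Vec3 → ℝ → ℝ) : Vec3 → ℝ → Mat3 :=
  fun x t i α => μ (ξf x t).1 (θf x t) * pdx α (fun y s => vf y s i) x t

/-- Fourier heat flux Q = k ∇θ. -/
def fourierQ (k : Mat3 → ℝ → ℝ) (ξf : Vec3 → ℝ → Xi)
    (θf : Vec3 → ℝ → ℝ) : Vec3 → ℝ → Vec3 :=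
  fun x t α => k (ξf x t).1 (θf x t) * pdx α θf x t

/-- The entropy identity for Newtonian viscosity and Fourier heat conduction (zero supply). -/
def EntropyIdentNF (ψ : Xi → ℝ → ℝ) (μ k : Mat3 → ℝ → ℝ) (ξf : Vec3 → ℝ → Xi)
    (vf : Vec3 → ℝ → Vec3) (θf : Vec3 → ℝ → ℝ) (x : Vec3) (t : ℝ) : Prop :=
  pdt (fun y s => etaHat ψ (ξf y s) (θf y s)) x t
    - ∑ α, pdx α (fun y s =>
        k (ξf y s).1 (θf y s) * pdx α θf y s / θf y s) x t
  = k (ξf x t).1 (θf x t) * (∑ α, (pdx α θf x t)^2) / (θf x t)^2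
    + μ (ξf x t).1 (θf x t) *
        (∑ α, ∑ i, (pdx α (fun y s => vf y s i) x t)^2) / θf x t

/-- Fundamental domain of the 3-torus. -/
def Box : Set Vec3 := Set.Icc 0 1

/-- Periodicity in the space variables with period 1. -/
def PeriodicX {E : Type*} (f : Vec3 → ℝ → E) : Prop :=
  ∀ (x : Vec3) (t : ℝ) (α : Fin 3), f (x + Pi.single α 1) t = f x t

/-- C^n regularity of a space-time field. -/
def FieldC {E : Type*} [NormedAddCommGroup E] [NormedSpace ℝ E]
    (n : ℕ) (f : Vec3 → ℝ → E) : Prop :=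
  ContDiff ℝ n (fun p : Vec3 × ℝ => f p.1 p.2)

/-- Spatial integral of the relative entropy at time t. -/
def relEntInt (ψ : Xi → ℝ → ℝ) (ξf : Vec3 → ℝ → Xi) (vf : Vec3 → ℝ → Vec3)
    (θf : Vec3 → ℝ → ℝ) (ξf' : Vec3 → ℝ → Xi) (vf' : Vec3 → ℝ → Vec3)
    (θf' : Vec3 → ℝ → ℝ) (t : ℝ) : ℝ :=
  ∫ x in Box, relEnt ψ (ξf x t) (vf x t) (θf x t) (ξf' x t) (vf' x t) (θf' x t)


/-- Spatial partial derivative of a static field. -/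
def pds (α : Fin 3) (f : Vec3 → ℝ) (x : Vec3) : ℝ :=
  deriv (fun s => f (Function.update x α s)) (x α)

/-- Deformation gradient ∇y of a static map y : ℝ³ → ℝ³. -/
def gradV (y : Vec3 → Vec3) (x : Vec3) : Mat3 :=
  fun i α => pds α (fun z => y z i) x

/-- ∂ψ/∂F_{iα} for ψ = ψ(F,θ). -/
def dFM (i α : Fin 3) (ψ : Mat3 → ℝ → ℝ) (F : Mat3) (θ : ℝ) : ℝ :=
  deriv (fun s => ψ (updMat F i α s) θ) (F i α)

/-- ∂ψ/∂θ for ψ = ψ(F,θ). -/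
def dThM (ψ : Mat3 → ℝ → ℝ) (F : Mat3) (θ : ℝ) : ℝ :=
  deriv (fun s => ψ F s) θ

/-- Index set for the full extended state U = (ξ, v, θ) ∈ ℝ²³. -/
abbrev UIdx := Idx ⊕ (Fin 3 ⊕ Unit)

def uComp (U : FullState) : UIdx → ℝ
  | .inl B => xiComp U.1 B
  | .inr (.inl i) => U.2.1 i
  | .inr (.inr _) => U.2.2

def uUpd (U : FullState) : UIdx → ℝ → FullState
  | .inl B, s => (xiUpd U.1 B s, U.2)
  | .inr (.inl i), s => (U.1, Function.update U.2.1 i s, U.2.2)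
  | .inr (.inr _), s => (U.1, U.2.1, s)

/-- Partial derivative in the state variables (ξ,v,θ). -/
def pdU (B : UIdx) (f : FullState → ℝ) (U : FullState) : ℝ :=
  deriv (fun s => f (uUpd U B s)) (uComp U B)

/-- Second partial derivative in the state variables (ξ,v,θ). -/
def pdU2 (A B : UIdx) (f : FullState → ℝ) (U : FullState) : ℝ :=
  pdU A (fun V => pdU B f V) U

/-- Test functions for the weak formulation on T³ × [0,T):
C¹, periodic in x, compactly supported in time in [0,T). -/
def TestFun (T : ℝ) (φ : Vec3 → ℝ → ℝ) : Prop :=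
  ContDiff ℝ 1 (fun p : Vec3 × ℝ => φ p.1 p.2) ∧ PeriodicX φ ∧
  ∃ T' : ℝ, T' < T ∧ ∀ (x : Vec3) (t : ℝ), T' ≤ t → φ x t = 0

/-- The elastic stress Σ_{iα} of the augmented constitutive theory. -/
def SigmaA (ψ : Xi → ℝ → ℝ) (ξ : Xi) (θ : ℝ) (i α : Fin 3) : ℝ :=
  ∑ B : Idx, dXi B ψ ξ θ * dPhi B i α ξ.1


/-! In the balance of total energy the kinetic part is removed with the balance of momentum, which
leaves `∂ₜe = ∇v : (Σ + Z) + div Q + r`. Because `Σ` and `-η` are the partial derivatives of the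
same potential `ψ`, the Gibbs relation `∂ₜe = Σ : ∂ₜF + θ ∂ₜη` holds along every process, and
`∂ₜF = ∇v` makes the elastic power `Σ : ∇v` cancel. What remains is
`θ ∂ₜη = ∇v : Z + div Q + r`, to be divided by `θ`. -/

open Function (uncurry update)

/-- The stress `Σ = ∂ψ/∂F` determined by a free energy `ψ`. -/
def stressM (ψ : Mat3 → ℝ → ℝ) (F : Mat3) (θ : ℝ) : Mat3 := fun i α => dFM i α ψ F θ

/-- The entropy `η = -∂ψ/∂θ` determined by a free energy `ψ`. -/
def entropyM (ψ : Mat3 → ℝ → ℝ) (F : Mat3) (θ : ℝ) : ℝ := -(dThM ψ F θ)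

/-- The internal energy `e = ψ + θη` determined by a free energy `ψ`, with `η = -∂ψ/∂θ`
substituted. -/
def internalEnergyM (ψ : Mat3 → ℝ → ℝ) (F : Mat3) (θ : ℝ) : ℝ := ψ F θ - θ * dThM ψ F θ

/-- The spatial divergence `∂_α q_α` of a space-time vector field. For a matrix field `A`, the
row-wise divergence `∂_α A_{iα}` is `spaceDiv (fun z s => A z s i)`. -/
def spaceDiv (q : Vec3 → ℝ → Vec3) (x : Vec3) (t : ℝ) : ℝ :=
  ∑ α, pdx α (fun z s => q z s α) x t

section PartialDerivatives

variable {f g : Vec3 → ℝ → ℝ} {x : Vec3} {t : ℝ}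

lemma hasDerivAt_pdt (hf : DifferentiableAt ℝ (uncurry f) (x, t)) :
    HasDerivAt (fun s => f x s) (pdt f x t) t :=
  (DifferentiableAt.comp t hf
    ((differentiableAt_const x).prodMk differentiableAt_id)).hasDerivAt

lemma hasDerivAt_pdx (α : Fin 3) (hf : DifferentiableAt ℝ (uncurry f) (x, t)) :
    HasDerivAt (fun s => f (update x α s) t) (pdx α f x t) (x α) := by
  have hline : DifferentiableAt ℝ (fun s => (update x α s, t)) (x α) :=
    (hasDerivAt_update x α (x α)).differentiableAt.prodMk (differentiableAt_const t)
  have hf' : DifferentiableAt ℝ (uncurry f) (update x α (x α), t) := by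
    rwa [Function.update_eq_self]
  exact (DifferentiableAt.comp (x α) hf' hline).hasDerivAt

lemma pdx_mul (α : Fin 3) (hf : DifferentiableAt ℝ (uncurry f) (x, t))
    (hg : DifferentiableAt ℝ (uncurry g) (x, t)) :
    pdx α (fun z s => f z s * g z s) x t = pdx α f x t * g x t + f x t * pdx α g x t :=
  ((hasDerivAt_pdx α hf).fun_mul (hasDerivAt_pdx α hg)).deriv.trans <| by
    simp only [Function.update_eq_self]

lemma pdx_div (α : Fin 3) (hf : DifferentiableAt ℝ (uncurry f) (x, t))
    (hg : DifferentiableAt ℝ (uncurry g) (x, t)) (hg0 : g x t ≠ 0) :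
    pdx α (fun z s => f z s / g z s) x t =
      (pdx α f x t * g x t - f x t * pdx α g x t) / g x t ^ 2 := by
  have hg0' : g (update x α (x α)) t ≠ 0 := by rwa [Function.update_eq_self]
  exact ((hasDerivAt_pdx α hf).fun_div (hasDerivAt_pdx α hg) hg0').deriv.trans <| by
    simp only [Function.update_eq_self]

lemma pdx_sum {ι : Type*} (u : Finset ι) {f : ι → Vec3 → ℝ → ℝ} (α : Fin 3)
    (hf : ∀ i ∈ u, DifferentiableAt ℝ (uncurry (f i)) (x, t)) :
    pdx α (fun z s => ∑ i ∈ u, f i z s) x t = ∑ i ∈ u, pdx α (f i) x t :=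
  (HasDerivAt.fun_sum (A := fun i s => f i (update x α s) t)
    fun i hi => hasDerivAt_pdx α (hf i hi)).deriv

lemma spaceDiv_div {q : Vec3 → ℝ → Vec3} (hq : DifferentiableAt ℝ (uncurry q) (x, t))
    (hg : DifferentiableAt ℝ (uncurry g) (x, t)) (hg0 : g x t ≠ 0) :
    spaceDiv (fun z s α => q z s α / g z s) x t =
      spaceDiv q x t / g x t - (∑ α, pdx α g x t * q x t α) / g x t ^ 2 := by
  simp only [spaceDiv, Finset.sum_div, ← Finset.sum_sub_distrib]
  refine Finset.sum_congr rfl fun α _ => ?_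
  rw [pdx_div α (f := fun z s => q z s α) (differentiableAt_pi.1 hq α) hg hg0]
  field_simp

lemma spaceDiv_transpose_mulVec {A : Vec3 → ℝ → Mat3} {v : Vec3 → ℝ → Vec3}
    (hA : DifferentiableAt ℝ (uncurry A) (x, t)) (hv : DifferentiableAt ℝ (uncurry v) (x, t)) :
    spaceDiv (fun z s α => ∑ i, A z s i α * v z s i) x t =
      ∑ i, v x t i * spaceDiv (fun z s => A z s i) x t +
        ∑ α, ∑ i, pdx α (fun z s => v z s i) x t * A x t i α := by
  have hAi (i α : Fin 3) : DifferentiableAt ℝ (uncurry fun z s => A z s i α) (x, t) :=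
    differentiableAt_pi.1 (differentiableAt_pi.1 hA i) α
  have hvi (i : Fin 3) : DifferentiableAt ℝ (uncurry fun z s => v z s i) (x, t) :=
    differentiableAt_pi.1 hv i
  have hpdx (α : Fin 3) : pdx α (fun z s => ∑ i, A z s i α * v z s i) x t =
      ∑ i, v x t i * pdx α (fun z s => A z s i α) x t +
        ∑ i, pdx α (fun z s => v z s i) x t * A x t i α := by
    rw [pdx_sum (f := fun i z s => A z s i α * v z s i) Finset.univ α
      fun i _ => (hAi i α).mul (hvi i), ← Finset.sum_add_distrib]
    refine Finset.sum_congr rfl fun i _ => ?_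
    rw [pdx_mul α (hAi i α) (hvi i)]
    ring
  simp only [spaceDiv, hpdx, Finset.sum_add_distrib, Finset.mul_sum]
  rw [Finset.sum_comm]

lemma pdt_kineticEnergy_add {v : Vec3 → ℝ → Vec3}
    (hv : DifferentiableAt ℝ (uncurry v) (x, t))
    (hg : DifferentiableAt ℝ (fun s => g x s) t) :
    pdt (fun z s => (1 / 2) * (∑ i, (v z s i) ^ 2) + g z s) x t =
      ∑ i, v x t i * pdt (fun z s => v z s i) x t + pdt g x t := by
  have hvi (i : Fin 3) := hasDerivAt_pdt (f := fun z s => v z s i) (differentiableAt_pi.1 hv i)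
  have hsq := HasDerivAt.fun_sum (u := Finset.univ) fun i _ => (hvi i).fun_pow 2
  refine ((hsq.const_mul (1 / 2)).fun_add hg.hasDerivAt).deriv.trans ?_
  rw [Finset.mul_sum]
  congr 1
  refine Finset.sum_congr rfl fun i _ => ?_
  push_cast
  ring

end PartialDerivatives

section ContDiffAtTwo

variable {E G : Type*} [NormedAddCommGroup E] [NormedSpace ℝ E] [NormedAddCommGroup G]
  [NormedSpace ℝ G] {f : E → G} {p : E}

lemma differentiableAt_fderiv_apply_of_contDiffAt_two (hf : ContDiffAt ℝ 2 f p) (w : E) :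
    DifferentiableAt ℝ (fun q => fderiv ℝ f q w) p :=
  ((hf.fderiv_right (m := 1) (by norm_num)).differentiableAt one_ne_zero).clm_apply
    (differentiableAt_const w)

lemma eventually_differentiableAt_of_contDiffAt_two (hf : ContDiffAt ℝ 2 f p) :
    ∀ᶠ q in 𝓝 p, DifferentiableAt ℝ f q :=
  (hf.eventually (by simp)).mono fun _ hq => hq.differentiableAt two_ne_zero

end ContDiffAtTwo

section ConstitutiveTheory

variable {ψ : Mat3 → ℝ → ℝ} {A : Mat3} {c : ℝ}

lemma hasDerivAt_updMat (A : Mat3) (i α : Fin 3) (s : ℝ) :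
    HasDerivAt (updMat A i α) (Pi.single i (Pi.single α 1)) s := by
  refine ((hasFDerivAt_update A (update (A i) α s)).comp_hasDerivAt s
    (hasDerivAt_update (A i) α s)).congr_deriv ?_
  ext j
  rcases eq_or_ne j i with rfl | hj <;> simp [*]

lemma dThM_eq_fderiv (h : DifferentiableAt ℝ (uncurry ψ) (A, c)) :
    dThM ψ A c = fderiv ℝ (uncurry ψ) (A, c) (0, 1) :=
  (h.hasFDerivAt.comp_hasDerivAt c ((hasDerivAt_const c A).prodMk (hasDerivAt_id c))).deriv

lemma dFM_eq_fderiv (i α : Fin 3) (h : DifferentiableAt ℝ (uncurry ψ) (A, c)) :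
    dFM i α ψ A c = fderiv ℝ (uncurry ψ) (A, c) (Pi.single i (Pi.single α 1), 0) := by
  have hself : updMat A i α (A i α) = A := by simp only [updMat, Function.update_eq_self]
  have hline := (hasDerivAt_updMat A i α (A i α)).prodMk (hasDerivAt_const (A i α) c)
  exact (h.hasFDerivAt.comp_hasDerivAt_of_eq (A i α) hline (by rw [hself])).deriv

lemma differentiableAt_entropyM (hψ : ContDiffAt ℝ 2 (uncurry ψ) (A, c)) :
    DifferentiableAt ℝ (uncurry (entropyM ψ)) (A, c) :=
  (differentiableAt_fderiv_apply_of_contDiffAt_two hψ (0, 1)).neg.congr_of_eventuallyEq <|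
    (eventually_differentiableAt_of_contDiffAt_two hψ).mono fun _ hp =>
      congrArg Neg.neg (dThM_eq_fderiv hp)

lemma differentiableAt_stressM (hψ : ContDiffAt ℝ 2 (uncurry ψ) (A, c)) :
    DifferentiableAt ℝ (uncurry (stressM ψ)) (A, c) :=
  differentiableAt_pi.2 fun i => differentiableAt_pi.2 fun α =>
    (differentiableAt_fderiv_apply_of_contDiffAt_two hψ
      (Pi.single i (Pi.single α 1), 0)).congr_of_eventuallyEq <|
      (eventually_differentiableAt_of_contDiffAt_two hψ).mono fun _ hp => dFM_eq_fderiv i α hp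

lemma fderiv_apply_eq_sum_dFM_add_dThM (h : DifferentiableAt ℝ (uncurry ψ) (A, c)) (B : Mat3)
    (b : ℝ) : fderiv ℝ (uncurry ψ) (A, c) (B, b) =
      ∑ α, ∑ i, dFM i α ψ A c * B i α + dThM ψ A c * b := by
  have hB : (B, b) = ∑ i, ∑ α, B i α • ((Pi.single i (Pi.single α 1), 0) : Mat3 × ℝ)
      + b • ((0, 1) : Mat3 × ℝ) := by
    ext j k
    · simp [Prod.fst_sum, Finset.sum_apply, Pi.single_apply, apply_ite]
    · simp [Prod.snd_sum]
  simp only [hB, map_add, map_sum, map_smul, smul_eq_mul, ← dFM_eq_fderiv _ _ h,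
    ← dThM_eq_fderiv h, mul_comm]
  rw [Finset.sum_comm]

/- Gibbs relation: the terms `θ' ∂ψ/∂θ` of `dψ` and of `d(θη)` cancel. -/
lemma hasDerivAt_internalEnergyM {F : ℝ → Mat3} {θ : ℝ → ℝ} {F' : Mat3} {θ' η' t : ℝ}
    (hψ : DifferentiableAt ℝ (uncurry ψ) (F t, θ t)) (hF : HasDerivAt F F' t)
    (hθ : HasDerivAt θ θ' t) (hη : HasDerivAt (fun s => entropyM ψ (F s) (θ s)) η' t) :
    HasDerivAt (fun s => internalEnergyM ψ (F s) (θ s))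
      (∑ α, ∑ i, stressM ψ (F t) (θ t) i α * F' i α + θ t * η') t := by
  have hψt : HasDerivAt (fun s => ψ (F s) (θ s)) _ t :=
    HasFDerivAt.comp_hasDerivAt (l := uncurry ψ) t hψ.hasFDerivAt (hF.prodMk hθ)
  rw [fderiv_apply_eq_sum_dFM_add_dThM hψ] at hψt
  refine ((hψt.fun_add (hθ.fun_mul hη)).congr_deriv ?_).congr_of_eventuallyEq
    (.of_forall fun s => ?_)
  · simp only [stressM, entropyM]
    ring
  · simp only [internalEnergyM, entropyM]
    ring

end ConstitutiveTheory

lemma pdt_internalEnergy_of_balance {S Z : Vec3 → ℝ → Mat3} {v : Vec3 → ℝ → Vec3}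
    {e : Vec3 → ℝ → ℝ} {x : Vec3} {t h : ℝ}
    (hS : DifferentiableAt ℝ (uncurry S) (x, t)) (hZ : DifferentiableAt ℝ (uncurry Z) (x, t))
    (hv : DifferentiableAt ℝ (uncurry v) (x, t)) (he : DifferentiableAt ℝ (fun s => e x s) t)
    (hmom : ∀ i, pdt (fun z s => v z s i) x t - spaceDiv (fun z s => S z s i) x t =
      spaceDiv (fun z s => Z z s i) x t)
    (hen : pdt (fun z s => (1 / 2) * (∑ i, (v z s i) ^ 2) + e z s) x t
        - spaceDiv (fun z s α => ∑ i, S z s i α * v z s i) x t =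
      spaceDiv (fun z s α => ∑ i, Z z s i α * v z s i) x t + h) :
    pdt e x t = ∑ α, ∑ i, pdx α (fun z s => v z s i) x t * S x t i α
      + ∑ α, ∑ i, pdx α (fun z s => v z s i) x t * Z x t i α + h := by
  rw [pdt_kineticEnergy_add hv he, spaceDiv_transpose_mulVec hS hv,
    spaceDiv_transpose_mulVec hZ hv] at hen
  have hkinetic : ∑ i, v x t i * pdt (fun z s => v z s i) x t =
      ∑ i, v x t i * spaceDiv (fun z s => S z s i) x t
        + ∑ i, v x t i * spaceDiv (fun z s => Z z s i) x t := by
    rw [← Finset.sum_add_distrib]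
    exact Finset.sum_congr rfl fun i _ => by linear_combination v x t i * hmom i
  linarith

theorem entropy_production_thermoviscoelasticity_general
    {ψ : Mat3 → ℝ → ℝ} {F Z : Vec3 → ℝ → Mat3} {v Q : Vec3 → ℝ → Vec3} {θ r : Vec3 → ℝ → ℝ}
    {x : Vec3} {t : ℝ} (hψ : ContDiffAt ℝ 2 (uncurry ψ) (F x t, θ x t))
    (hF : DifferentiableAt ℝ (uncurry F) (x, t)) (hv : DifferentiableAt ℝ (uncurry v) (x, t))
    (hθ : DifferentiableAt ℝ (uncurry θ) (x, t)) (hZ : DifferentiableAt ℝ (uncurry Z) (x, t))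
    (hQ : DifferentiableAt ℝ (uncurry Q) (x, t)) (hθ0 : θ x t ≠ 0)
    (hkin : ∀ i α, pdt (fun z s => F z s i α) x t = pdx α (fun z s => v z s i) x t)
    (hmom : ∀ i, pdt (fun z s => v z s i) x t
        - spaceDiv (fun z s => stressM ψ (F z s) (θ z s) i) x t =
      spaceDiv (fun z s => Z z s i) x t)
    (hen : pdt (fun z s => (1 / 2) * (∑ i, (v z s i) ^ 2) + internalEnergyM ψ (F z s) (θ z s)) x t
        - spaceDiv (fun z s α => ∑ i, stressM ψ (F z s) (θ z s) i α * v z s i) x t =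
      spaceDiv (fun z s α => ∑ i, Z z s i α * v z s i) x t + spaceDiv Q x t + r x t) :
    pdt (fun z s => entropyM ψ (F z s) (θ z s)) x t - spaceDiv (fun z s α => Q z s α / θ z s) x t =
      (∑ α, pdx α θ x t * Q x t α) / θ x t ^ 2
        + (∑ α, ∑ i, pdx α (fun z s => v z s i) x t * Z x t i α) / θ x t + r x t / θ x t := by
  have hstate : DifferentiableAt ℝ (fun p : Vec3 × ℝ => (F p.1 p.2, θ p.1 p.2)) (x, t) :=
    hF.prodMk hθ
  have hS : DifferentiableAt ℝ (uncurry fun z s => stressM ψ (F z s) (θ z s)) (x, t) :=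
    DifferentiableAt.comp (g := uncurry (stressM ψ)) (x, t) (differentiableAt_stressM hψ) hstate
  have hη : DifferentiableAt ℝ (uncurry fun z s => entropyM ψ (F z s) (θ z s)) (x, t) :=
    DifferentiableAt.comp (g := uncurry (entropyM ψ)) (x, t) (differentiableAt_entropyM hψ) hstate
  have hFt : HasDerivAt (fun s => F x s) (fun i α => pdt (fun z s => F z s i α) x t) t :=
    hasDerivAt_pi.2 fun i => hasDerivAt_pi.2 fun α => hasDerivAt_pdt (f := fun z s => F z s i α)
      (differentiableAt_pi.1 (differentiableAt_pi.1 hF i) α)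
  have hgibbs := hasDerivAt_internalEnergyM (hψ.differentiableAt two_ne_zero) hFt
    (hasDerivAt_pdt hθ) (hasDerivAt_pdt hη)
  have henergy := (pdt_internalEnergy_of_balance hS hZ hv hgibbs.differentiableAt hmom
    (hen.trans (add_assoc _ _ _))).symm.trans hgibbs.deriv
  simp only [hkin, mul_comm (stressM _ _ _ _ _)] at henergy
  have hentropy : θ x t * pdt (fun z s => entropyM ψ (F z s) (θ z s)) x t =
      ∑ α, ∑ i, pdx α (fun z s => v z s i) x t * Z x t i α + (spaceDiv Q x t + r x t) := by
    linarith
  rw [spaceDiv_div hQ hθ hθ0, eq_div_of_mul_eq hθ0 ((mul_comm _ _).trans hentropy)]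
  ring

/-- entropy production identity for thermoviscoelasticity.
For ψ = ψ(F,θ) C² on M³ˣ³ × (0,∞), Σ = ∂ψ/∂F, η = −∂ψ/∂θ, e = ψ + θη,
any C² thermomechanical process (F,v,θ) with θ > 0 solving the
thermoviscoelasticity system with viscous stress Z, heat flux Q and supply r
satisfies ∂_t η − ∂_α(Q_α/θ) = ∇θ·Q/θ² + (∂_α v_i) Z_{iα}/θ + r/θ. -/
theorem entropy_production_thermoviscoelasticity
    (ψ : Mat3 → ℝ → ℝ)
    (hψ : ContDiffOn ℝ 2 (fun p : Mat3 × ℝ => ψ p.1 p.2) (Set.univ ×ˢ Set.Ioi (0:ℝ)))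
    (F : Vec3 → ℝ → Mat3) (v : Vec3 → ℝ → Vec3) (θ : Vec3 → ℝ → ℝ)
    (Z : Vec3 → ℝ → Mat3) (Q : Vec3 → ℝ → Vec3) (r : Vec3 → ℝ → ℝ)
    (hFreg : FieldC 2 F) (hvreg : FieldC 2 v) (hθreg : FieldC 2 θ)
    (hZreg : FieldC 1 Z) (hQreg : FieldC 1 Q)
    (hrcont : Continuous (fun p : Vec3 × ℝ => r p.1 p.2))
    (hθpos : ∀ (x : Vec3) (t : ℝ), 0 < t → 0 < θ x t)
    -- kinematic compatibility ∂_t F_{iα} = ∂_α v_i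
    (hkin : ∀ (x : Vec3) (t : ℝ), 0 < t → ∀ i α : Fin 3,
      pdt (fun z s => F z s i α) x t = pdx α (fun z s => v z s i) x t)
    -- balance of momentum ∂_t v_i − ∂_α Σ_{iα} = ∂_α Z_{iα}
    (hmom : ∀ (x : Vec3) (t : ℝ), 0 < t → ∀ i : Fin 3,
      pdt (fun z s => v z s i) x t
          - ∑ α, pdx α (fun z s => dFM i α ψ (F z s) (θ z s)) x t
        = ∑ α, pdx α (fun z s => Z z s i α) x t)
    -- balance of energy
    (hen : ∀ (x : Vec3) (t : ℝ), 0 < t →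
      pdt (fun z s => (1/2) * (∑ i, (v z s i)^2)
            + (ψ (F z s) (θ z s) - θ z s * dThM ψ (F z s) (θ z s))) x t
          - ∑ α, pdx α (fun z s =>
              ∑ i, dFM i α ψ (F z s) (θ z s) * v z s i) x t
        = ∑ α, pdx α (fun z s => ∑ i, Z z s i α * v z s i) x t
          + ∑ α, pdx α (fun z s => Q z s α) x t + r x t) :
    ∀ (x : Vec3) (t : ℝ), 0 < t →
      pdt (fun z s => -(dThM ψ (F z s) (θ z s))) x t
          - ∑ α, pdx α (fun z s => Q z s α / θ z s) x t
        = (∑ α, pdx α θ x t * Q x t α) / (θ x t)^2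
          + (∑ α, ∑ i, pdx α (fun z s => v z s i) x t * Z x t i α) / θ x t
          + r x t / θ x t := by
  intro x t ht
  have hψt : ContDiffAt ℝ 2 (uncurry ψ) (F x t, θ x t) :=
    hψ.contDiffAt (prod_mem_nhds univ_mem (Ioi_mem_nhds (hθpos x t ht)))
  exact entropy_production_thermoviscoelasticity_general hψt
    (hFreg.differentiable two_ne_zero _) (hvreg.differentiable two_ne_zero _)
    (hθreg.differentiable two_ne_zero _) (hZreg.differentiable one_ne_zero _)
    (hQreg.differentiable one_ne_zero _) (hθpos x t ht).ne'
    (hkin x t ht) (hmom x t ht) (hen x t ht)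

end
end

section
/- Appendix Lemma (bound on the relative strain–velocity product): Assume ψ̂ ∈ C³(ℝ^{19} × (0,∞)) satisfies the growth conditions (with p ≥ 4), and let M, δ > 0. Then there exist R = R(M,δ) and a constant C > 0 such that for every (ξ,v,θ) ∈ ℝ^{19} × ℝ³ × (0,∞) with ξ = (F,ζ,w), every (ξ̄,v̄,θ̄) ∈ Γ_{M,δ}, and every α ∈ {1,2,3}: | Σ_{B,i} ((∂Φ^B/∂F_{iα})(F) − (∂Φ^B/∂F_{iα})(F̄)) (v_i − v̄_i) | ≤ C(|ξ|_{p,q,r} + θ^ℓ + ½|v − v̄|²) whenever |ξ|_{p,q,r} + θ^ℓ + |v|² > R, and ≤ C(|F − F̄|² + |ζ − ζ̄|² + |w − w̄|² + |θ − θ̄|² + |v − v̄|²) whenever |ξ|_{p,q,r} + θ^ℓ + |v|² ≤ R. -/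
open Real MeasureTheory Filter Set Topology ENNReal NNReal

noncomputable section

/-!
The entries of `∂Φ/∂F` are constant, linear and quadratic in `F`, so that
`|∂Φ/∂F(F) - ∂Φ/∂F(F')| ≤ K (1 + |F| + |F'|) |F - F'|`. On bounded sets the product with `v - v'` is
then controlled by `|F - F'| |v - v'|`. Far from the origin Young's inequality bounds it by
`|F|⁴ + |v - v'|²` up to a constant; this is where `p ≥ 4` enters, and the constant is absorbed
because the energy `|ξ|_{p,q,r} + θ^ℓ + |v - v'|²/2` is bounded below there.
-/

section Inequalities

lemma abs_sum_le_card_mul {ι : Type*} [Fintype ι] {f : ι → ℝ} {K : ℝ} (h : ∀ i, |f i| ≤ K) :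
    |∑ i, f i| ≤ Fintype.card ι * K := by
  simpa only [nsmul_eq_mul, Finset.card_univ] using
    (Finset.abs_sum_le_sum_abs f Finset.univ).trans
      (Finset.sum_le_card_nsmul _ _ K fun i _ => h i)

lemma abs_mul_sub_mul_le {x y x' y' a b d : ℝ} (hx : |x| ≤ a) (hy' : |y'| ≤ b)
    (hdx : |x - x'| ≤ d) (hdy : |y - y'| ≤ d) : |x * y - x' * y'| ≤ (a + b) * d := by
  have ha : 0 ≤ a := (abs_nonneg x).trans hx
  have hd : 0 ≤ d := (abs_nonneg _).trans hdx
  calc |x * y - x' * y'| = |x * (y - y') + (x - x') * y'| := by ring_nf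
    _ ≤ |x| * |y - y'| + |x - x'| * |y'| := by
        simpa only [abs_mul] using abs_add_le (x * (y - y')) ((x - x') * y')
    _ ≤ a * d + d * b := by gcongr
    _ = (a + b) * d := by ring

lemma rpow_le_one_add_rpow {x s p : ℝ} (hx : 0 ≤ x) (hs : 0 ≤ s) (hsp : s ≤ p) :
    x ^ s ≤ 1 + x ^ p := by
  rcases le_total x 1 with h | h
  · linarith [Real.rpow_le_one hx h hs, Real.rpow_nonneg hx p]
  · linarith [Real.rpow_le_rpow_of_exponent_le h hsp]

lemma one_add_add_mul_mul_le_of_pow_four_le {a m E V : ℝ} (ha : 0 ≤ a) (hm : 0 ≤ m)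
    (haE : a ^ 4 ≤ 1 + E) (hEV : 1 ≤ E + 1 / 2 * V ^ 2) :
    (1 + a + m) * (a + m) * V ≤ 4 * ((1 + m) ^ 4 + 2) * (E + 1 / 2 * V ^ 2) := by
  have young : (1 + a + m) * (a + m) * V ≤ 1 / 2 * (((1 + m) + a) ^ 4 + V ^ 2) := by
    have hsq : ((1 + a + m) * (a + m)) ^ 2 ≤ (((1 + m) + a) ^ 2) ^ 2 := by
      gcongr
      nlinarith
    nlinarith [two_mul_le_add_sq ((1 + a + m) * (a + m)) V]
  have convexity : ((1 + m) + a) ^ 4 ≤ 2 ^ 3 * ((1 + m) ^ 4 + a ^ 4) :=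
    add_pow_le (by positivity) ha 4
  have absorb : (1 + m) ^ 4 + 1 ≤ ((1 + m) ^ 4 + 1) * (E + 1 / 2 * V ^ 2) :=
    le_mul_of_one_le_right (by positivity) hEV
  linarith [sq_nonneg V]

end Inequalities

section Norms

lemma mnorm_eq_norm (F : Mat3) :
    mnorm F = ‖WithLp.toLp 2 fun ij : Fin 3 × Fin 3 => F ij.1 ij.2‖ := by
  simp only [mnorm, EuclideanSpace.norm_eq, Real.norm_eq_abs, sq_abs, Fintype.sum_prod_type]

lemma mnorm_nonneg (F : Mat3) : 0 ≤ mnorm F := Real.sqrt_nonneg _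

lemma mnorm_sub_le (F G : Mat3) : mnorm (F - G) ≤ mnorm F + mnorm G := by
  simp only [mnorm_eq_norm]
  exact norm_sub_le (WithLp.toLp 2 fun ij : Fin 3 × Fin 3 => F ij.1 ij.2)
    (WithLp.toLp 2 fun ij => G ij.1 ij.2)

lemma abs_apply_le_mnorm (F : Mat3) (i j : Fin 3) : |F i j| ≤ mnorm F := by
  rw [mnorm_eq_norm]
  exact PiLp.norm_apply_le (WithLp.toLp 2 fun ij : Fin 3 × Fin 3 => F ij.1 ij.2) (i, j)

lemma vnorm_nonneg (v : Vec3) : 0 ≤ vnorm v := Real.sqrt_nonneg _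

lemma vnorm_sq (v : Vec3) : vnorm v ^ 2 = ∑ i, v i ^ 2 :=
  Real.sq_sqrt (Finset.sum_nonneg fun _ _ => sq_nonneg _)

lemma abs_apply_le_vnorm (v : Vec3) (i : Fin 3) : |v i| ≤ vnorm v :=
  Real.abs_le_sqrt <|
    Finset.single_le_sum (f := fun j => v j ^ 2) (fun _ _ => sq_nonneg _) (Finset.mem_univ i)

lemma vnorm_sq_le (v w : Vec3) : vnorm v ^ 2 ≤ 2 * (vnorm (v - w) ^ 2 + vnorm w ^ 2) := by
  simp only [vnorm_sq, ← Finset.sum_add_distrib, Finset.mul_sum]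
  refine Finset.sum_le_sum fun i _ => ?_
  simpa only [Pi.sub_apply, sub_add_cancel] using add_sq_le (a := v i - w i) (b := w i)

lemma mnorm_rpow_le_xiNorm (p q r : ℝ) (ξ : Xi) : mnorm ξ.1 ^ p ≤ xiNorm p q r ξ := by
  have hζ : 0 ≤ mnorm ξ.2.1 ^ q := Real.rpow_nonneg (mnorm_nonneg _) _
  have hw : 0 ≤ |ξ.2.2| ^ r := Real.rpow_nonneg (abs_nonneg _) _
  rw [xiNorm]
  linarith

end Norms

section NullLagrangians

lemma abs_eps3_le_one (i j k : Fin 3) : |eps3 i j k| ≤ 1 := by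
  unfold eps3
  split_ifs <;> norm_num

lemma eps3_swap_left (i j k : Fin 3) : eps3 j i k = -eps3 i j k := by
  fin_cases i <;> fin_cases j <;> fin_cases k <;> simp [eps3]

lemma eps3_swap_right (i j k : Fin 3) : eps3 i k j = -eps3 i j k := by
  fin_cases i <;> fin_cases j <;> fin_cases k <;> simp [eps3]

lemma abs_eps3_mul_eps3_mul_le {x K : ℝ} (hx : |x| ≤ K) (i j k α β γ : Fin 3) :
    |eps3 i j k * eps3 α β γ * x| ≤ K := by
  have hε : |eps3 i j k * eps3 α β γ| ≤ 1 := by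
    rw [abs_mul]
    exact mul_le_one₀ (abs_eps3_le_one i j k) (abs_nonneg _) (abs_eps3_le_one α β γ)
  rw [abs_mul]
  exact (mul_le_of_le_one_left (abs_nonneg x) hε).trans hx

lemma hasDerivAt_updMat_apply (F : Mat3) (i α j β : Fin 3) (s : ℝ) :
    HasDerivAt (fun s => updMat F i α s j β) (if j = i then if β = α then 1 else 0 else 0) s := by
  unfold updMat
  by_cases hj : j = i
  · subst hj
    by_cases hβ : β = α
    · subst hβ
      simpa using hasDerivAt_id' s
    · simpa [hβ] using hasDerivAt_const s (F j β)
  · simpa [hj] using hasDerivAt_const s (F j β)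

lemma updMat_self (F : Mat3) (i α : Fin 3) : updMat F i α (F i α) = F := by
  simp only [updMat, Function.update_eq_self]

lemma dPhi_grad (j β i α : Fin 3) (F : Mat3) :
    dPhi (.inl (j, β)) i α F = if j = i then if β = α then 1 else 0 else 0 :=
  (hasDerivAt_updMat_apply F i α j β _).deriv

lemma dPhi_cof (j β i α : Fin 3) (F : Mat3) :
    dPhi (.inr (.inl (j, β))) i α F = ∑ k, ∑ γ, eps3 j i k * eps3 β α γ * F k γ := by
  refine HasDerivAt.deriv (f := fun s => cof3 (updMat F i α s) j β) ?_
  have product_rule := HasDerivAt.const_mul (1 / 2 : ℝ) <|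
    HasDerivAt.fun_sum (u := Finset.univ) fun k _ =>
    HasDerivAt.fun_sum (u := Finset.univ) fun l _ =>
    HasDerivAt.fun_sum (u := Finset.univ) fun γ _ =>
    HasDerivAt.fun_sum (u := Finset.univ) fun κ _ =>
    ((hasDerivAt_updMat_apply F i α k γ (F i α)).const_mul (eps3 j k l * eps3 β γ κ)).fun_mul
      (hasDerivAt_updMat_apply F i α l κ (F i α))
  refine product_rule.congr_deriv ?_
  simp only [updMat_self, mul_ite, ite_mul, mul_one, mul_zero, zero_mul, Finset.sum_add_distrib,
    Finset.sum_ite_irrel, Finset.sum_const_zero, Finset.sum_ite_eq', Finset.mem_univ, if_true]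
  -- By antisymmetry of `ε` the two terms of the product rule coincide.
  simp only [eps3_swap_right j i, eps3_swap_right β α, neg_mul_neg]
  ring

lemma dPhi_det (u : Unit) (i α : Fin 3) (F : Mat3) :
    dPhi (.inr (.inr u)) i α F = cof3 F i α := by
  refine HasDerivAt.deriv (f := fun s => det3 (updMat F i α s)) ?_
  have product_rule := HasDerivAt.const_mul (1 / 6 : ℝ) <|
    HasDerivAt.fun_sum (u := Finset.univ) fun j _ =>
    HasDerivAt.fun_sum (u := Finset.univ) fun k _ =>
    HasDerivAt.fun_sum (u := Finset.univ) fun l _ =>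
    HasDerivAt.fun_sum (u := Finset.univ) fun β _ =>
    HasDerivAt.fun_sum (u := Finset.univ) fun γ _ =>
    HasDerivAt.fun_sum (u := Finset.univ) fun κ _ =>
    (((hasDerivAt_updMat_apply F i α j β (F i α)).const_mul (eps3 j k l * eps3 β γ κ)).fun_mul
      (hasDerivAt_updMat_apply F i α k γ (F i α))).fun_mul
      (hasDerivAt_updMat_apply F i α l κ (F i α))
  refine product_rule.congr_deriv ?_
  simp only [updMat_self, mul_ite, ite_mul, mul_one, mul_zero, zero_mul, add_mul,
    Finset.sum_add_distrib, Finset.sum_ite_irrel, Finset.sum_const_zero, Finset.sum_ite_eq',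
    Finset.mem_univ, if_true]
  -- By antisymmetry of `ε` the three terms of the product rule coincide.
  simp only [eps3_swap_right _ i, eps3_swap_right _ α, eps3_swap_left i, eps3_swap_left α, neg_neg,
    neg_mul_neg, cof3]
  ring

lemma abs_cof3_sub_cof3_le (F G : Mat3) (i α : Fin 3) :
    |cof3 F i α - cof3 G i α| ≤ 81 / 2 * (mnorm F + mnorm G) * mnorm (F - G) := by
  have termwise (j k β γ : Fin 3) :
      |eps3 i j k * eps3 α β γ * (F j β * F k γ - G j β * G k γ)|
        ≤ (mnorm F + mnorm G) * mnorm (F - G) :=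
    abs_eps3_mul_eps3_mul_le (abs_mul_sub_mul_le (abs_apply_le_mnorm F j β)
      (abs_apply_le_mnorm G k γ) (abs_apply_le_mnorm (F - G) j β)
      (abs_apply_le_mnorm (F - G) k γ)) ..
  have summed := abs_sum_le_card_mul fun j => abs_sum_le_card_mul fun k =>
    abs_sum_le_card_mul fun β => abs_sum_le_card_mul fun γ => termwise j k β γ
  have factored : cof3 F i α - cof3 G i α =
      1 / 2 * ∑ j, ∑ k, ∑ β, ∑ γ, eps3 i j k * eps3 α β γ * (F j β * F k γ - G j β * G k γ) := by
    simp only [cof3, mul_sub, Finset.sum_sub_distrib, mul_assoc]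
  rw [factored, abs_mul, abs_of_pos one_half_pos]
  rw [Fintype.card_fin] at summed
  push_cast at summed
  linarith

lemma abs_dPhi_sub_dPhi_le (B : Idx) (i α : Fin 3) (F G : Mat3) :
    |dPhi B i α F - dPhi B i α G| ≤ 41 * (1 + mnorm F + mnorm G) * mnorm (F - G) := by
  have hF := mul_nonneg (mnorm_nonneg F) (mnorm_nonneg (F - G))
  have hG := mul_nonneg (mnorm_nonneg G) (mnorm_nonneg (F - G))
  have hFG := mnorm_nonneg (F - G)
  rcases B with ⟨j, β⟩ | ⟨j, β⟩ | u
  · rw [dPhi_grad, dPhi_grad, sub_self, abs_zero]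
    linarith
  · have summed := abs_sum_le_card_mul fun k => abs_sum_le_card_mul fun γ =>
      abs_eps3_mul_eps3_mul_le (abs_apply_le_mnorm (F - G) k γ) j i k β α γ
    rw [Fintype.card_fin] at summed
    simp only [dPhi_cof, ← Finset.sum_sub_distrib, ← mul_sub]
    refine summed.trans ?_
    push_cast
    linarith
  · rw [dPhi_det, dPhi_det]
    linarith [abs_cof3_sub_cof3_le F G i α]

end NullLagrangians

section RelativeStrainVelocity

/-- The `α`-component of the relative strain-velocity product
`(∂Φ^B/∂F_{iα}(F) - ∂Φ^B/∂F_{iα}(F')) (v_i - v'_i)`, summed over `B` and `i`. -/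
def relStrainVelocity (F F' : Mat3) (v v' : Vec3) (α : Fin 3) : ℝ :=
  ∑ B : Idx, ∑ i, (dPhi B i α F - dPhi B i α F') * (v i - v' i)

variable {F F' : Mat3} {v v' : Vec3} {M : ℝ}

-- The constant is `19 · 3 · 41`: there are `19 · 3` terms `(B, i)`.
lemma abs_relStrainVelocity_le (F F' : Mat3) (v v' : Vec3) (α : Fin 3) :
    |relStrainVelocity F F' v v' α|
      ≤ 2337 * ((1 + mnorm F + mnorm F') * mnorm (F - F') * vnorm (v - v')) := by
  have termwise (B : Idx) (i : Fin 3) : |(dPhi B i α F - dPhi B i α F') * (v i - v' i)|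
      ≤ 41 * (1 + mnorm F + mnorm F') * mnorm (F - F') * vnorm (v - v') := by
    rw [abs_mul]
    have hΦ := abs_dPhi_sub_dPhi_le B i α F F'
    exact mul_le_mul hΦ (abs_apply_le_vnorm (v - v') i) (abs_nonneg _) ((abs_nonneg _).trans hΦ)
  have summed := abs_sum_le_card_mul fun B => abs_sum_le_card_mul fun i => termwise B i
  simp only [Fintype.card_sum, Fintype.card_prod, Fintype.card_fin, Fintype.card_unit] at summed
  refine summed.trans (le_of_eq ?_)
  push_cast
  ring

lemma abs_relStrainVelocity_le_of_bounded {A : ℝ} (hF : mnorm F ≤ A) (hF' : mnorm F' ≤ M)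
    (α : Fin 3) :
    |relStrainVelocity F F' v v' α|
      ≤ 2337 * (1 + A + M) * (mnorm (F - F') ^ 2 + vnorm (v - v') ^ 2) := by
  have hd := mnorm_nonneg (F - F')
  have hV := vnorm_nonneg (v - v')
  have hAM : 0 ≤ 1 + A + M := by linarith [mnorm_nonneg F, mnorm_nonneg F']
  have young : mnorm (F - F') * vnorm (v - v') ≤ mnorm (F - F') ^ 2 + vnorm (v - v') ^ 2 := by
    nlinarith [two_mul_le_add_sq (mnorm (F - F')) (vnorm (v - v'))]
  calc |relStrainVelocity F F' v v' α|
      ≤ 2337 * ((1 + mnorm F + mnorm F') * mnorm (F - F') * vnorm (v - v')) :=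
        abs_relStrainVelocity_le F F' v v' α
    _ ≤ 2337 * ((1 + A + M) * mnorm (F - F') * vnorm (v - v')) := by gcongr
    _ = 2337 * (1 + A + M) * (mnorm (F - F') * vnorm (v - v')) := by ring
    _ ≤ 2337 * (1 + A + M) * (mnorm (F - F') ^ 2 + vnorm (v - v') ^ 2) := by gcongr

lemma abs_relStrainVelocity_le_of_large {p E : ℝ} (hp : 4 ≤ p) (hF' : mnorm F' ≤ M)
    (hv' : vnorm v' ≤ M) (hFE : mnorm F ^ p ≤ E) (hlarge : 2 * M ^ 2 + 4 < E + vnorm v ^ 2)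
    (α : Fin 3) :
    |relStrainVelocity F F' v v' α|
      ≤ 2337 * (4 * ((1 + M) ^ 4 + 2)) * (E + 1 / 2 * vnorm (v - v') ^ 2) := by
  have hF0 := mnorm_nonneg F
  have hV0 := vnorm_nonneg (v - v')
  have hE0 : 0 ≤ E := (Real.rpow_nonneg hF0 p).trans hFE
  have hM0 : 0 ≤ M := (mnorm_nonneg F').trans hF'
  have pow_four_le : mnorm F ^ 4 ≤ 1 + E := by
    have h := rpow_le_one_add_rpow hF0 zero_le_four hp
    rw [Real.rpow_ofNat] at h
    linarith
  have energy_ge_one : 1 ≤ E + 1 / 2 * vnorm (v - v') ^ 2 := by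
    have hv'sq : vnorm v' ^ 2 ≤ M ^ 2 := pow_le_pow_left₀ (vnorm_nonneg v') hv' 2
    linarith [vnorm_sq_le v v']
  calc |relStrainVelocity F F' v v' α|
      ≤ 2337 * ((1 + mnorm F + mnorm F') * mnorm (F - F') * vnorm (v - v')) :=
        abs_relStrainVelocity_le F F' v v' α
    _ ≤ 2337 * ((1 + mnorm F + M) * (mnorm F + M) * vnorm (v - v')) := by
        have hFF' : mnorm (F - F') ≤ mnorm F + M := (mnorm_sub_le F F').trans (by gcongr)
        have hd := mnorm_nonneg (F - F')
        gcongr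
    _ ≤ 2337 * (4 * ((1 + M) ^ 4 + 2)) * (E + 1 / 2 * vnorm (v - v') ^ 2) := by
        rw [mul_assoc 2337]
        exact mul_le_mul_of_nonneg_left
          (one_add_add_mul_mul_le_of_pow_four_le hF0 hM0 pow_four_le energy_ge_one) (by norm_num)

theorem bound_relative_strain_velocity_general (M : ℝ) :
    ∃ R C : ℝ, 0 < C ∧
      ∀ p q r ℓ : ℝ, 4 ≤ p → ∀ (ξ : Xi) (v : Vec3) (θ : ℝ), 0 < θ →
        ∀ U' : FullState, mnorm U'.1.1 ≤ M → vnorm U'.2.1 ≤ M → ∀ α : Fin 3,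
        (R < xiNorm p q r ξ + θ ^ ℓ + (vnorm v)^2 →
          |∑ B : Idx, ∑ i, (dPhi B i α ξ.1 - dPhi B i α U'.1.1)
              * (v i - U'.2.1 i)|
            ≤ C * (xiNorm p q r ξ + θ ^ ℓ
                + (1/2) * (∑ i, (v i - U'.2.1 i)^2))) ∧
        (xiNorm p q r ξ + θ ^ ℓ + (vnorm v)^2 ≤ R →
          |∑ B : Idx, ∑ i, (dPhi B i α ξ.1 - dPhi B i α U'.1.1)
              * (v i - U'.2.1 i)|
            ≤ C * (mnorm (ξ.1 - U'.1.1)^2 + mnorm (ξ.2.1 - U'.1.2.1)^2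
                + (ξ.2.2 - U'.1.2.2)^2 + (θ - U'.2.2)^2
                + ∑ i, (v i - U'.2.1 i)^2)) := by
  set R := 2 * M ^ 2 + 4
  set Clarge := 2337 * (4 * ((1 + M) ^ 4 + 2))
  set Cbounded := 2337 * (1 + (1 + R) + M)
  refine ⟨R, max Clarge Cbounded, lt_max_of_lt_left (by positivity), ?_⟩
  intro p q r ℓ hp ξ v θ hθ U' hF' hv' α
  have hθℓ : 0 ≤ θ ^ ℓ := Real.rpow_nonneg hθ.le ℓ
  have hFE : mnorm ξ.1 ^ p ≤ xiNorm p q r ξ + θ ^ ℓ := by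
    linarith [mnorm_rpow_le_xiNorm p q r ξ]
  have hE : 0 ≤ xiNorm p q r ξ + θ ^ ℓ := (Real.rpow_nonneg (mnorm_nonneg _) p).trans hFE
  have hsum : ∑ i, (v i - U'.2.1 i) ^ 2 = vnorm (v - U'.2.1) ^ 2 := (vnorm_sq _).symm
  rw [hsum]
  refine ⟨fun hR => ?_, fun hR => ?_⟩
  · refine (abs_relStrainVelocity_le_of_large hp hF' hv' hFE hR α).trans ?_
    gcongr
    exact le_max_left _ _
  · have hF : mnorm ξ.1 ≤ 1 + R := by
      have h := rpow_le_one_add_rpow (mnorm_nonneg ξ.1) zero_le_one (by linarith : 1 ≤ p)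
      rw [Real.rpow_one] at h
      linarith [sq_nonneg (vnorm v)]
    refine (abs_relStrainVelocity_le_of_bounded hF hF' α).trans ?_
    gcongr
    · exact le_max_right _ _
    · linarith [sq_nonneg (mnorm (ξ.2.1 - U'.1.2.1)), sq_nonneg (ξ.2.2 - U'.1.2.2),
        sq_nonneg (θ - U'.2.2)]

end RelativeStrainVelocity

/-- Appendix Lemma A.1(3), bound on the relative
strain-velocity product. -/
theorem bound_relative_strain_velocity
    (ψ : Xi → ℝ → ℝ) (c p q r ℓ : ℝ)
    (hψ3 : PsiC3 ψ) (hgrow : GrowthCond ψ c p q r ℓ)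
    (hp : 4 ≤ p) (hq : 1 < q) (hr : 1 < r) (hl : 1 < ℓ)
    (M δ : ℝ) (hM : 0 < M) (hδ : 0 < δ) :
    ∃ R C : ℝ, 0 < C ∧
      ∀ (ξ : Xi) (v : Vec3) (θ : ℝ), 0 < θ → ∀ U' ∈ Gamma M δ, ∀ α : Fin 3,
        (R < xiNorm p q r ξ + θ ^ ℓ + (vnorm v)^2 →
          |∑ B : Idx, ∑ i, (dPhi B i α ξ.1 - dPhi B i α U'.1.1)
              * (v i - U'.2.1 i)|
            ≤ C * (xiNorm p q r ξ + θ ^ ℓ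
                + (1/2) * (∑ i, (v i - U'.2.1 i)^2))) ∧
        (xiNorm p q r ξ + θ ^ ℓ + (vnorm v)^2 ≤ R →
          |∑ B : Idx, ∑ i, (dPhi B i α ξ.1 - dPhi B i α U'.1.1)
              * (v i - U'.2.1 i)|
            ≤ C * (mnorm (ξ.1 - U'.1.1)^2 + mnorm (ξ.2.1 - U'.1.2.1)^2
                + (ξ.2.2 - U'.1.2.2)^2 + (θ - U'.2.2)^2
                + ∑ i, (v i - U'.2.1 i)^2)) := by
  obtain ⟨R, C, hC, h⟩ := bound_relative_strain_velocity_general M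
  exact ⟨R, C, hC, fun ξ v θ hθ U' hU' => h p q r ℓ hp ξ v θ hθ U' hU'.1 hU'.2.2.2.1⟩

end
end
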